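/- There exists a square-summable real sequence δ = (δ_n)_{n≥1} with ℓ² norm ‖δ‖ ≤ 0.13 such that for every integer k ≥ 1 one has ∑_{n=1}^∞ ∫_0^{δ_n} cos(πy) · ( 1/(n + 1/2 − y − k) + 1/(n + 1/2 − y + k) ) dy = (1/π) ∫_{−1/2}^{1/2} cos(πx)/(x − k)² dx. -/

import Mathlib

/-! The left-hand side of the `k`-th equation is split into a part linear in
`s_n = sin (π δ_n) / π` and a small nonlinear remainder, and the resulting equation for `s` is
solved by the contraction principle in `ℓ²`. Sequences are indexed by all `n ≥ 0`, with
`m = n + 1/2`, subject to the constraint that the entry `n = 0` vanishes; dropping that entry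
gives the sequence `δ`.

*Linear part.* Replacing `y` by `0` in the rational factor turns the left-hand side into
`∑ a_k(n) s_n` with `a_k(n) = 1/(m-k) + 1/(m+k)` (`hbA`). Partial fractions, telescoping over
the half-integers and `∑ 1/m² = π²/2` show that the rows `a_0, a_1, …` are orthogonal in `ℓ²`,
with `‖a_0‖² = 2π²` and `‖a_k‖ = π` for `k ≥ 1` (`hasSum_hbA_mul`). Hence `s ↦ (⟨a_k, s⟩)_{k ≥ 1}`
is inverted isometrically, up to the factor `π`, on the closed span of `a_1, a_2, …`. Adding a
multiple of `a_0`, which is orthogonal to this span and has nonzero entry at `n = 0`, makes the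
solution vanish at `n = 0`; the right inverse `B` obtained in this way has norm at most `1/√8`
(`exists_hb_inverse`).

*Nonlinear part.* For `|y| ≤ 0.13` the error `1/(x-y) - 1/x` is at most `|y| / (|x| (|x| - 0.13))`.
So the remainder is dominated by the nonnegative kernel `hbK`, all of whose row and column sums
are at most `12.851`, applied to `G(δ_n)` with `G(d) = ∫₀ᵈ |y| cos (π y) dy` (`hbE_sub_le`). In
terms of `s` one has `|G| ≤ 0.065 |s|`, and `G` is Lipschitz with constant `0.13`. The Schur test
(`hbK_schur`) therefore bounds the remainder in `ℓ²` by `0.836 ‖s‖` and its Lipschitz constant by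
`1.671`. Truncating `s` at `±0.126` (`hbClamp`) makes the map defined on all of `ℓ²` without
affecting these bounds.

*Conclusion.* A quartic majorant of `1/(z-1)² + 1/(z+1)²` gives norm at most `0.25` for the
right-hand side (`hbRhs_sq`). The map `s ↦ B (rhs - N s)` is a contraction with constant `0.6`,
and its fixed point satisfies `‖s‖ ≤ 0.25 / (√8 - 0.836) ≤ 0.126` (`exists_hb_fixedPoint`), so the
truncation is inactive. Finally `|δ_n| ≤ (0.13/0.126) |s_n|` yields `‖δ‖ ≤ 0.13`. -/

/-! ### Sums over half-integers -/

lemma int_half_ne (i : ℤ) : (i : ℝ) + 1 / 2 ≠ 0 := by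
  intro h
  have h2 : ((2 * i + 1 : ℤ) : ℝ) = 0 := by push_cast; linarith
  have h3 : 2 * i + 1 = 0 := by exact_mod_cast h2
  omega

lemma hasSum_odd_sq : HasSum (fun n : ℕ => 1 / ((n : ℝ) + 1 / 2) ^ 2) (Real.pi ^ 2 / 2) := by
  have h := hasSum_zeta_two
  have hev : HasSum (fun n : ℕ => 1 / (((2 * n : ℕ) : ℝ)) ^ 2) (1 / 4 * (Real.pi ^ 2 / 6)) := by
    refine (h.mul_left (1 / 4)).congr_fun ?_
    intro n
    rcases eq_or_ne n 0 with rfl | hn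
    · simp
    · push_cast; field_simp; norm_num
  have hs : Summable (fun n : ℕ => 1 / (((2 * n + 1 : ℕ) : ℝ)) ^ 2) :=
    h.summable.comp_injective (i := fun n : ℕ => 2 * n + 1) (fun a b hab => by simpa using hab)
  have h1 := (hev.even_add_odd (f := fun n : ℕ => 1 / ((n : ℝ)) ^ 2) hs.hasSum).unique h
  have h2 := hs.hasSum.mul_left 4
  have h3 : 4 * ∑' n : ℕ, 1 / (((2 * n + 1 : ℕ) : ℝ)) ^ 2 = Real.pi ^ 2 / 2 := by linarith
  rw [h3] at h2
  refine h2.congr_fun ?_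
  intro n
  push_cast
  have : (n : ℝ) + 1 / 2 ≠ 0 := by positivity
  field_simp
  ring

lemma hasSum_int_sq : HasSum (fun i : ℤ => 1 / ((i : ℝ) + 1 / 2) ^ 2) (Real.pi ^ 2) := by
  have := HasSum.of_nat_of_neg_add_one (f := fun i : ℤ => 1 / ((i : ℝ) + 1 / 2) ^ 2)
    (m := Real.pi ^ 2 / 2) (m' := Real.pi ^ 2 / 2)
    (by simpa using hasSum_odd_sq)
    (by
      refine hasSum_odd_sq.congr_fun ?_
      intro n
      push_cast
      congr 1
      ring)
  convert this using 1
  ring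

/-- The telescoping series `∑ (1/x - 1/(x+1))` over the half-integers `x`. -/
lemma hasSum_int_step :
    HasSum (fun i : ℤ => 1 / ((i : ℝ) + 1 / 2) - 1 / ((i : ℝ) + 3 / 2)) 0 := by
  have hpos : HasSum (fun n : ℕ => 1 / ((n : ℝ) + 1 / 2) - 1 / ((n : ℝ) + 3 / 2)) 2 := by
    rw [hasSum_iff_tendsto_nat_of_nonneg]
    · have h : ∀ N : ℕ, ∑ n ∈ Finset.range N, (1 / ((n : ℝ) + 1 / 2) - 1 / ((n : ℝ) + 3 / 2))
          = 2 - 1 / ((N : ℝ) + 1 / 2) := by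
        intro N
        induction N with
        | zero => norm_num
        | succ N ih => rw [Finset.sum_range_succ, ih]; push_cast; ring
      simp_rw [h]
      have : Filter.Tendsto (fun N : ℕ => 1 / ((N : ℝ) + 1 / 2)) Filter.atTop (nhds 0) := by
        apply Filter.Tendsto.div_atTop tendsto_const_nhds
        exact Filter.tendsto_atTop_add_const_right _ _ tendsto_natCast_atTop_atTop
      simpa using tendsto_const_nhds.sub this
    · intro n
      rw [sub_nonneg]
      gcongr
      norm_num
  have hneg : HasSum (fun n : ℕ => 1 / (((-((n : ℤ) + 1) : ℤ) : ℝ) + 1 / 2)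
      - 1 / (((-((n : ℤ) + 1) : ℤ) : ℝ) + 3 / 2)) (-2) := by
    rw [← hasSum_nat_add_iff' 1]
    have : (-2 : ℝ) - ∑ i ∈ Finset.range 1, (1 / (((-((i : ℤ) + 1) : ℤ) : ℝ) + 1 / 2)
      - 1 / (((-((i : ℤ) + 1) : ℤ) : ℝ) + 3 / 2)) = 2 := by
      simp; norm_num
    rw [this]
    refine hpos.congr_fun ?_
    intro n
    push_cast
    rw [show -((n : ℝ) + 1 + 1) + 1 / 2 = -(n + 3 / 2) by ring,
      show -((n : ℝ) + 1 + 1) + 3 / 2 = -(n + 1 / 2) by ring, one_div_neg_eq_neg_one_div,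
      one_div_neg_eq_neg_one_div]
    ring
  have := HasSum.of_nat_of_neg_add_one
    (f := fun i : ℤ => 1 / ((i : ℝ) + 1 / 2) - 1 / ((i : ℝ) + 3 / 2)) (by simpa using hpos) hneg
  simpa using this

/-- Telescoping with an arbitrary integer step `q`, starting from the half-integers shifted by
`p`. -/
lemma hasSum_int_shift (p : ℤ) (q : ℕ) :
    HasSum (fun i : ℤ => 1 / ((i : ℝ) + 1 / 2 - p) - 1 / ((i : ℝ) + 1 / 2 - p + q)) 0 := by
  have h : ∀ t : ℤ, HasSum (fun i : ℤ =>
      1 / (((i + t : ℤ) : ℝ) + 1 / 2) - 1 / (((i + t : ℤ) : ℝ) + 3 / 2)) 0 := fun t =>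
    (Equiv.addRight t).hasSum_iff.2 hasSum_int_step
  induction q with
  | zero => simp
  | succ q ih =>
    have := ih.add (h (q - p))
    rw [add_zero] at this
    refine this.congr_fun ?_
    intro i
    push_cast
    rw [show (i : ℝ) + (q - p) + 1 / 2 = i + 1 / 2 - p + q by ring,
      show (i : ℝ) + (q - p) + 3 / 2 = i + 1 / 2 - p + (q + 1) by ring]
    ring

/-- Orthogonality of the integer translates of `1/x` on the half-integers. -/
lemma hasSum_int_prod (p q : ℤ) :
    HasSum (fun i : ℤ => 1 / ((i : ℝ) + 1 / 2 - p) * (1 / ((i : ℝ) + 1 / 2 - q)))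
      (if p = q then Real.pi ^ 2 else 0) := by
  have key : ∀ p : ℤ, ∀ t : ℕ, 0 < t →
      HasSum (fun i : ℤ => 1 / ((i : ℝ) + 1 / 2 - p) *
        (1 / ((i : ℝ) + 1 / 2 - ((p - t : ℤ) : ℝ)))) 0 := by
    intro p t ht
    have := (hasSum_int_shift p t).mul_left (1 / (t : ℝ))
    rw [mul_zero] at this
    refine this.congr_fun ?_
    intro i
    have h1 : (i : ℝ) + 1 / 2 - p ≠ 0 := by
      have := int_half_ne (i - p); push_cast at this; convert this using 1; ring
    have h2 : (i : ℝ) + 1 / 2 - p + t ≠ 0 := by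
      have := int_half_ne (i - p + t); push_cast at this; convert this using 1; ring
    have h3 : (t : ℝ) ≠ 0 := by positivity
    have h4 : (i : ℝ) + 1 / 2 - ((p - t : ℤ) : ℝ) = i + 1 / 2 - p + t := by push_cast; ring
    rw [h4]
    generalize (i : ℝ) + 1 / 2 - p = x at h1 h2
    field_simp
    ring
  rcases lt_trichotomy p q with h | h | h
  · rw [if_neg h.ne]
    obtain ⟨t, ht⟩ := Int.eq_ofNat_of_zero_le (sub_nonneg.2 h.le)
    have hp : p = q - t := by omega
    rw [hp]
    refine (key q t (by omega)).congr_fun ?_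
    intro i
    ring
  · subst h
    rw [if_pos rfl]
    have := (Equiv.addRight (-p)).hasSum_iff.2 hasSum_int_sq
    refine this.congr_fun ?_
    intro i
    simp only [Function.comp, Equiv.coe_addRight]
    push_cast
    rw [show (i : ℝ) + -p + 1 / 2 = i + 1 / 2 - p by ring, one_div_mul_one_div, ← sq]
  · rw [if_neg h.ne']
    obtain ⟨t, ht⟩ := Int.eq_ofNat_of_zero_le (sub_nonneg.2 h.le)
    have hq : q = p - t := by omega
    rw [hq]
    exact key p t (by omega)

/-- The coefficient `1/(m-k) + 1/(m+k)`, with `m = n + 1/2`. -/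
noncomputable def hbA (k n : ℕ) : ℝ :=
  1 / ((n : ℝ) + 1 / 2 - k) + 1 / ((n : ℝ) + 1 / 2 + k)

/-- The rows of the linearised system are orthogonal in `ℓ²`: pairing `n` with `-n-1` turns the
sum into one over all half-integers. -/
lemma hasSum_hbA_mul (k l : ℕ) : HasSum (fun n : ℕ => hbA k n * hbA l n)
    (if k = l then (if k = 0 then 2 * Real.pi ^ 2 else Real.pi ^ 2) else 0) := by
  have h := ((hasSum_int_prod k l).nat_add_neg_add_one).add
    ((hasSum_int_prod k (-l)).nat_add_neg_add_one)
  convert h using 1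
  · funext n
    unfold hbA
    push_cast
    rw [show -((n : ℝ) + 1) + 1 / 2 - k = - (n + 1 / 2 + k) by ring,
      show -((n : ℝ) + 1) + 1 / 2 - l = - (n + 1 / 2 + l) by ring,
      show -((n : ℝ) + 1) + 1 / 2 - -l = - (n + 1 / 2 - l) by ring,
      one_div_neg_eq_neg_one_div, one_div_neg_eq_neg_one_div, one_div_neg_eq_neg_one_div]
    ring
  · by_cases hkl : k = l
    · subst hkl
      by_cases hk : k = 0
      · subst hk; simp; ring
      · have : ¬ ((k : ℤ) = -k) := by omega
        simp [hk, this]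
    · have h1 : ¬ ((k : ℤ) = l) := by omega
      have h2 : ¬ ((k : ℤ) = -l) := by omega
      simp [hkl, h1, h2]

/-! ### The dominating kernel -/

/-- The kernel bounding `1/(x-y) - 1/x` relative to `|y|`, for `|y| ≤ 0.13`. -/
noncomputable def hbκ (x : ℝ) : ℝ := 1 / (|x| * (|x| - 0.13))

lemma hbκ_neg (x : ℝ) : hbκ (-x) = hbκ x := by simp [hbκ]

lemma half_le_abs (i : ℤ) : 1 / 2 ≤ |(i : ℝ) + 1 / 2| := by
  rcases le_or_gt 0 i with h | h
  · have : (0 : ℝ) ≤ i := by exact_mod_cast h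
    rw [abs_of_pos (by linarith)]
    linarith
  · have : (i : ℝ) ≤ -1 := by exact_mod_cast (by omega : i ≤ -1)
    rw [abs_of_neg (by linarith)]
    linarith

lemma hbκ_nonneg (i : ℤ) : 0 ≤ hbκ ((i : ℝ) + 1 / 2) := by
  have := half_le_abs i
  have h2 : 0 ≤ |(i : ℝ) + 1 / 2| - 0.13 := by norm_num at this ⊢; linarith
  unfold hbκ
  positivity

lemma hasSum_telescope : HasSum (fun n : ℕ => 1 / ((n : ℝ) + 1) - 1 / ((n : ℝ) + 2)) 1 := by
  rw [hasSum_iff_tendsto_nat_of_nonneg]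
  · have h : ∀ N : ℕ, ∑ n ∈ Finset.range N, (1 / ((n : ℝ) + 1) - 1 / ((n : ℝ) + 2))
        = 1 - 1 / ((N : ℝ) + 1) := by
      intro N
      induction N with
      | zero => norm_num
      | succ N ih => rw [Finset.sum_range_succ, ih]; push_cast; ring
    simp_rw [h]
    simpa using tendsto_const_nhds.sub (tendsto_one_div_add_atTop_nhds_zero_nat (𝕜 := ℝ))
  · intro n
    rw [sub_nonneg]
    gcongr
    norm_num

/-- The first term is `1 / (0.5 * 0.37) < 5.4055`; the others are at most `1.02` times the terms of
the telescoping series of `1 / ((n + 1) (n + 2))`. -/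
lemma exists_hasSum_hbκ_nat :
    ∃ S ≤ (6.4255 : ℝ), HasSum (fun n : ℕ => hbκ ((n : ℝ) + 1 / 2)) S := by
  have hle : ∀ n : ℕ, hbκ (((n + 1 : ℕ) : ℝ) + 1 / 2) ≤
      1.02 * (1 / ((n : ℝ) + 1) - 1 / ((n : ℝ) + 2)) := by
    intro n
    have hn : (0 : ℝ) ≤ n := Nat.cast_nonneg n
    unfold hbκ
    push_cast
    rw [abs_of_pos (by linarith)]
    have e : 1.02 * (1 / ((n : ℝ) + 1) - 1 / ((n : ℝ) + 2)) =
        1.02 / (((n : ℝ) + 1) * (n + 2)) := by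
      field_simp; ring
    rw [e, div_le_div_iff₀ (by norm_num; nlinarith) (by positivity)]
    norm_num
    nlinarith [sq_nonneg ((n : ℝ) - 1.3)]
  have hnn : ∀ n : ℕ, 0 ≤ hbκ (((n + 1 : ℕ) : ℝ) + 1 / 2) := fun n => by
    simpa using hbκ_nonneg ((n + 1 : ℕ) : ℤ)
  have ht := hasSum_telescope.mul_left 1.02
  have hs : Summable fun n : ℕ => hbκ (((n + 1 : ℕ) : ℝ) + 1 / 2) :=
    Summable.of_nonneg_of_le hnn hle ht.summable
  have hsum := hasSum_le hle hs.hasSum ht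
  refine ⟨∑' n : ℕ, hbκ (((n + 1 : ℕ) : ℝ) + 1 / 2) + hbκ (1 / 2), ?_, ?_⟩
  · have : hbκ (1 / 2) ≤ 5.4055 := by
      unfold hbκ
      rw [abs_of_pos (by norm_num)]
      norm_num
    linarith
  · have := (hasSum_nat_add_iff (f := fun n : ℕ => hbκ ((n : ℝ) + 1 / 2)) 1).1 hs.hasSum
    simpa using this

lemma exists_hasSum_hbκ_int :
    ∃ T ≤ (12.851 : ℝ), HasSum (fun i : ℤ => hbκ ((i : ℝ) + 1 / 2)) T := by
  obtain ⟨S, hS, h⟩ := exists_hasSum_hbκ_nat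
  refine ⟨S + S, by linarith, HasSum.of_nat_of_neg_add_one (by simpa using h) ?_⟩
  refine h.congr_fun ?_
  intro n
  rw [← hbκ_neg]
  congr 1
  push_cast
  ring

/-- The kernel dominating the nonlinear part of the system. -/
noncomputable def hbK (k n : ℕ) : ℝ :=
  hbκ ((n : ℝ) + 1 / 2 - k) + hbκ ((n : ℝ) + 1 / 2 + k)

lemma hbK_nonneg (k n : ℕ) : 0 ≤ hbK k n := by
  have h1 := hbκ_nonneg (n - k)
  have h2 := hbκ_nonneg (n + k)
  push_cast at h1 h2
  unfold hbK
  rw [show (n : ℝ) + 1 / 2 - k = n - k + 1 / 2 by ring,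
    show (n : ℝ) + 1 / 2 + k = n + k + 1 / 2 by ring]
  linarith

lemma hbK_row (k : ℕ) : ∃ T ≤ (12.851 : ℝ), HasSum (fun n : ℕ => hbK k n) T := by
  obtain ⟨T, hT, h⟩ := exists_hasSum_hbκ_int
  refine ⟨T, hT, ?_⟩
  have := ((Equiv.addRight (-(k : ℤ))).hasSum_iff.2 h).nat_add_neg_add_one
  refine this.congr_fun ?_
  intro n
  simp only [Function.comp, Equiv.coe_addRight, hbK]
  congr 1
  · congr 1; push_cast; ring
  · rw [← hbκ_neg]; congr 1; push_cast; ring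

/-- The columns of the kernel, over `k ≥ 1`: the two summands of `hbK` run through all
half-integers except the one belonging to `k = 0`. -/
lemma hbK_col (n : ℕ) : ∃ T ≤ (12.851 : ℝ), HasSum (fun k : ℕ => hbK (k + 1) n) T := by
  obtain ⟨T, hT, h⟩ := exists_hasSum_hbκ_int
  have h1 := ((Equiv.subLeft (n : ℤ)).hasSum_iff.2 h).nat_add_neg
  have h2 := (hasSum_nat_add_iff' 1).2 h1
  refine ⟨_, ?_, h2.congr_fun ?_⟩
  · have := hbκ_nonneg n
    simp at this ⊢
    linarith
  · intro k
    simp only [Function.comp, Equiv.subLeft_apply, hbK]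
    congr 1
    · congr 1; push_cast; ring
    · congr 1; push_cast; ring

/-! ### The Schur test and the linearised system in ℓ² -/

/-- The real Hilbert space `ℓ²(ℕ)`. -/
abbrev HbH : Type := lp (fun _ : ℕ => ℝ) 2

lemma hbH_memℓp {x : ℕ → ℝ} : Memℓp x 2 ↔ Summable fun n => x n ^ 2 := by
  rw [memℓp_gen_iff (by norm_num)]
  simp

lemma hbH_summable (x : HbH) : Summable fun n => x n ^ 2 := hbH_memℓp.1 (lp.memℓp x)

lemma hbH_norm_sq (x : HbH) : ‖x‖ ^ 2 = ∑' n, x n ^ 2 := by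
  rw [← real_inner_self_eq_norm_sq, lp.inner_eq_tsum]
  congr 1
  funext n
  simp [sq]

lemma hbK_le (k n : ℕ) : hbK k n ≤ 12.851 := by
  obtain ⟨T, hT, h⟩ := hbK_row k
  exact (le_hasSum h n fun j _ => hbK_nonneg k j).trans hT

lemma hbK_summable_sq {x : ℕ → ℝ} (hx : Summable fun n => x n ^ 2) (k : ℕ) :
    Summable fun n => hbK k n * x n ^ 2 :=
  Summable.of_nonneg_of_le (fun n => mul_nonneg (hbK_nonneg k n) (sq_nonneg _))
    (fun n => mul_le_mul_of_nonneg_right (hbK_le k n) (sq_nonneg _)) (hx.mul_left 12.851)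

lemma hbK_summable {x : ℕ → ℝ} (hx : Summable fun n => x n ^ 2) (k : ℕ) :
    Summable fun n => hbK k n * |x n| := by
  obtain ⟨T, hT, h⟩ := hbK_row k
  refine Summable.of_nonneg_of_le (fun n => mul_nonneg (hbK_nonneg k n) (abs_nonneg _))
    (fun n => ?_) (h.summable.add (hbK_summable_sq hx k))
  have : |x n| ≤ 1 + x n ^ 2 := by
    rw [← sq_abs]; nlinarith [sq_nonneg (|x n| - 1)]
  nlinarith [hbK_nonneg k n]

/-- Cauchy–Schwarz against a row of the kernel. -/
lemma hbK_sq_le {x : ℕ → ℝ} (hx : Summable fun n => x n ^ 2) (k : ℕ) :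
    (∑' n, hbK k n * |x n|) ^ 2 ≤ 12.851 * ∑' n, hbK k n * x n ^ 2 := by
  obtain ⟨T, hT, h⟩ := hbK_row k
  have e1 : ∀ n, √(hbK k n) ^ (2 : ℝ) = hbK k n := fun n => by
    rw [Real.rpow_two, Real.sq_sqrt (hbK_nonneg k n)]
  have e2 : ∀ n, (√(hbK k n) * |x n|) ^ (2 : ℝ) = hbK k n * x n ^ 2 := fun n => by
    rw [Real.rpow_two, mul_pow, Real.sq_sqrt (hbK_nonneg k n), sq_abs]
  have e3 : ∀ n, √(hbK k n) * (√(hbK k n) * |x n|) = hbK k n * |x n| := fun n => by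
    rw [← mul_assoc, Real.mul_self_sqrt (hbK_nonneg k n)]
  have hs := Real.inner_le_Lp_mul_Lq_tsum_of_nonneg (f := fun n => √(hbK k n))
    (g := fun n => √(hbK k n) * |x n|) Real.HolderConjugate.two_two
    (fun n => Real.sqrt_nonneg _) (fun n => by positivity)
    (by simpa only [e1] using h.summable) (by simpa only [e2] using hbK_summable_sq hx k)
  simp only [e1, e2, e3, ← Real.sqrt_eq_rpow] at hs
  have h0 : 0 ≤ ∑' n, hbK k n * |x n| :=
    tsum_nonneg fun n => mul_nonneg (hbK_nonneg k n) (abs_nonneg _)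
  have h1 : 0 ≤ ∑' n, hbK k n * x n ^ 2 :=
    tsum_nonneg fun n => mul_nonneg (hbK_nonneg k n) (sq_nonneg _)
  have hT0 : 0 ≤ T := h.nonneg fun n => hbK_nonneg k n
  rw [h.tsum_eq] at hs
  calc _ ≤ (√T * √(∑' n, hbK k n * x n ^ 2)) ^ 2 := by gcongr
    _ = T * ∑' n, hbK k n * x n ^ 2 := by rw [mul_pow, Real.sq_sqrt hT0, Real.sq_sqrt h1]
    _ ≤ _ := by gcongr

/-- The Schur test for finitely many rows. -/
lemma hbK_schur_finset {x : ℕ → ℝ} (hx : Summable fun n => x n ^ 2) (F : Finset ℕ) :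
    ∑ k ∈ F, (∑' n, hbK (k + 1) n * |x n|) ^ 2 ≤ 12.851 ^ 2 * ∑' n, x n ^ 2 := by
  calc _ ≤ ∑ k ∈ F, 12.851 * ∑' n, hbK (k + 1) n * x n ^ 2 :=
        Finset.sum_le_sum fun k _ => hbK_sq_le hx (k + 1)
    _ = 12.851 * ∑' n, ∑ k ∈ F, hbK (k + 1) n * x n ^ 2 := by
        rw [← Finset.mul_sum, Summable.tsum_finsetSum fun k _ => hbK_summable_sq hx (k + 1)]
    _ ≤ 12.851 * ∑' n, 12.851 * x n ^ 2 := by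
        gcongr 12.851 * ?_
        refine Summable.tsum_le_tsum (fun n => ?_)
          (summable_sum fun k _ => hbK_summable_sq hx (k + 1)) (hx.mul_left _)
        rw [← Finset.sum_mul]
        gcongr
        obtain ⟨T, hT, h⟩ := hbK_col n
        exact (sum_le_hasSum F (fun k _ => hbK_nonneg (k + 1) n) h).trans hT
    _ = _ := by rw [tsum_mul_left]; ring

/-- Schur test for sequences dominated by the kernel applied to `x`. -/
lemma hbK_schur {x c : ℕ → ℝ} (hx : Summable fun n => x n ^ 2)
    (hc : ∀ k, |c k| ≤ ∑' n, hbK (k + 1) n * |x n|) :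
    (Summable fun k => c k ^ 2) ∧ ∑' k, c k ^ 2 ≤ 12.851 ^ 2 * ∑' n, x n ^ 2 := by
  have hF : ∀ F : Finset ℕ, ∑ k ∈ F, c k ^ 2 ≤ 12.851 ^ 2 * ∑' n, x n ^ 2 := fun F =>
    (Finset.sum_le_sum fun k _ => by
      rw [← sq_abs]
      exact pow_le_pow_left₀ (abs_nonneg _) (hc k) 2).trans (hbK_schur_finset hx F)
  exact ⟨summable_of_sum_le (fun k => sq_nonneg _) hF,
    Real.tsum_le_of_sum_le (fun k => sq_nonneg _) hF⟩

/-- The vector of `ℓ²` whose coordinates are `hbA k n`. -/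
noncomputable def hbRow (k : ℕ) : HbH :=
  ⟨fun n => hbA k n, hbH_memℓp.2 (by simpa only [sq] using (hasSum_hbA_mul k k).summable)⟩

lemma hbRow_apply (k n : ℕ) : hbRow k n = hbA k n := rfl

lemma hbRow_inner (k l : ℕ) : inner ℝ (hbRow k) (hbRow l) =
    if k = l then (if k = 0 then 2 * Real.pi ^ 2 else Real.pi ^ 2) else 0 := by
  rw [lp.inner_eq_tsum, ← (hasSum_hbA_mul k l).tsum_eq]
  congr 1
  funext n
  simp [hbRow_apply, mul_comm]

lemma hbRow_orthonormal : Orthonormal ℝ fun k : ℕ => (1 / Real.pi) • hbRow (k + 1) := by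
  rw [orthonormal_iff_ite]
  intro k l
  simp only [inner_smul_left, inner_smul_right, hbRow_inner]
  by_cases h : k = l
  · simp [h]; field_simp
  · simp [h]

/-- An isometry solving the linearised system, ignoring the constraint at `n = 0`. -/
lemma exists_hb_isometry : ∃ V : HbH →ₗᵢ[ℝ] HbH,
    (∀ c k, inner ℝ (hbRow (k + 1)) (V c) = Real.pi * c k) ∧
    ∀ c, inner ℝ (hbRow 0) (V c) = 0 := by
  have ho := hbRow_orthonormal.orthogonalFamily
  refine ⟨ho.linearIsometry, fun c k => ?_, fun c => ?_⟩
  · have h1 : ho.linearIsometry (lp.single 2 k (1 : ℝ)) = (1 / Real.pi) • hbRow (k + 1) := by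
      rw [ho.linearIsometry_apply_single]
      simp
    have h2 : hbRow (k + 1) = Real.pi • ho.linearIsometry (lp.single 2 k (1 : ℝ)) := by
      rw [h1, smul_smul, mul_one_div_cancel Real.pi_ne_zero, one_smul]
    rw [h2, inner_smul_left, LinearIsometry.inner_map_map, lp.inner_single_left]
    simp
  · have h1 := (ho.hasSum_linearIsometry c).mapL (innerSL ℝ (hbRow 0))
    refine h1.unique ?_
    convert hasSum_zero with k
    simp [hbRow_inner]

/-- Right inverse of the linearised system among sequences vanishing at `n = 0`, of norm at most
`1/√8`: the entry at `n = 0` of the isometric solution is cancelled by a multiple of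
`hbRow 0`. -/
lemma exists_hb_inverse : ∃ B : HbH →ₗ[ℝ] HbH,
    (∀ c, B c 0 = 0) ∧ (∀ c k, inner ℝ (hbRow (k + 1)) (B c) = c k) ∧
    ∀ c, 8 * ‖B c‖ ^ 2 ≤ ‖c‖ ^ 2 := by
  obtain ⟨V, hV, hV0⟩ := exists_hb_isometry
  let e : HbH := lp.single 2 0 (1 : ℝ)
  have he : ∀ x : HbH, inner ℝ e x = x 0 := fun x => by
    simp only [e, lp.inner_single_left]; simp
  have hr0 : hbRow 0 0 = 4 := by rw [hbRow_apply]; norm_num [hbA]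
  have hee : inner ℝ e e = 1 := by rw [he]; simp [e]
  let B : HbH →ₗ[ℝ] HbH := (1 / Real.pi) •
    (V.toLinearMap - (1 / 4 : ℝ) • ((innerₛₗ ℝ e).comp V.toLinearMap).smulRight (hbRow 0))
  have hB : ∀ c, B c = (1 / Real.pi) • (V c - (1 / 4 * V c 0) • hbRow 0) := fun c => by
    simp [B, he, smul_smul]
  refine ⟨B, fun c => ?_, fun c k => ?_, fun c => ?_⟩
  · rw [← he, hB, inner_smul_right, inner_sub_right, inner_smul_right, he, he, hr0]
    ring
  · rw [hB, inner_smul_right, inner_sub_right, hV, inner_smul_right, hbRow_inner]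
    simp
  · set t := V c 0 with ht
    have hn0 : ‖hbRow 0‖ ^ 2 = 2 * Real.pi ^ 2 := by
      rw [← real_inner_self_eq_norm_sq, hbRow_inner]; simp
    have hnorm : ‖B c‖ ^ 2 = (‖c‖ ^ 2 + t ^ 2 * Real.pi ^ 2 / 8) / Real.pi ^ 2 := by
      rw [hB, norm_smul, mul_pow, norm_sub_sq_real, inner_smul_right, real_inner_comm, hV0,
        norm_smul, mul_pow, hn0, V.norm_map]
      simp only [Real.norm_eq_abs, sq_abs]
      field_simp
      ring
    -- `t` is the inner product of `V c` with the component of `e` orthogonal to `hbRow 0`.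
    have ht2 : t ^ 2 ≤ (1 - 8 / Real.pi ^ 2) * ‖c‖ ^ 2 := by
      have h1 : t = inner ℝ (e - (2 / Real.pi ^ 2) • hbRow 0) (V c) := by
        rw [inner_sub_left, inner_smul_left, hV0, he]; simp [ht]
      have h2 : ‖e - (2 / Real.pi ^ 2) • hbRow 0‖ ^ 2 = 1 - 8 / Real.pi ^ 2 := by
        rw [norm_sub_sq_real, inner_smul_right, he, hr0, norm_smul, mul_pow, hn0,
          ← real_inner_self_eq_norm_sq, hee]
        simp only [Real.norm_eq_abs, sq_abs]
        field_simp
        ring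
      rw [← h2, ← V.norm_map c, h1, ← mul_pow, ← sq_abs]
      gcongr
      exact abs_real_inner_le_norm _ _
    rw [hnorm]
    have hp := Real.pi_pos
    rw [mul_div_assoc', div_le_iff₀ (by positivity)]
    have h3 : t ^ 2 * Real.pi ^ 2 ≤ (1 - 8 / Real.pi ^ 2) * ‖c‖ ^ 2 * Real.pi ^ 2 := by gcongr
    have h4 : (1 - 8 / Real.pi ^ 2) * ‖c‖ ^ 2 * Real.pi ^ 2 = (Real.pi ^ 2 - 8) * ‖c‖ ^ 2 := by
      field_simp
    nlinarith

/-! ### The nonlinear terms -/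

open intervalIntegral in
lemma integral_cos_pi (a b : ℝ) : ∫ y in a..b, Real.cos (Real.pi * y) =
    Real.sin (Real.pi * b) / Real.pi - Real.sin (Real.pi * a) / Real.pi := by
  rw [integral_comp_mul_left _ Real.pi_ne_zero, integral_cos, smul_eq_mul]
  ring

lemma abs_le_of_mem_uIcc {a b y r : ℝ} (ha : |a| ≤ r) (hb : |b| ≤ r) (hy : y ∈ Set.uIcc a b) :
    |y| ≤ r := by
  rw [abs_le] at *
  rw [Set.mem_uIcc] at hy
  rcases hy with h | h <;> constructor <;> linarith [h.1, h.2]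

lemma cos_pi_nonneg {y : ℝ} (hy : |y| ≤ 0.13) : 0 ≤ Real.cos (Real.pi * y) := by
  rw [abs_le] at hy
  norm_num at hy
  apply Real.cos_nonneg_of_mem_Icc
  constructor <;> nlinarith [Real.pi_pos, hy.1, hy.2]

lemma hbκ_bound {x y : ℝ} (hx : 1 / 2 ≤ |x|) (hy : |y| ≤ 0.13) :
    |1 / (x - y) - 1 / x| ≤ hbκ x * |y| := by
  have hx0 : x ≠ 0 := abs_pos.1 (by linarith)
  have h1 : |x| - 0.13 ≤ |x - y| := by
    have := abs_sub_abs_le_abs_sub x y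
    linarith
  have h2 : 0 < |x| - 0.13 := by norm_num at hx ⊢; linarith
  have hxy : x - y ≠ 0 := abs_pos.1 (by linarith)
  have e : 1 / (x - y) - 1 / x = y / (x * (x - y)) := by field_simp; ring
  rw [e, abs_div, abs_mul, hbκ, one_div_mul_eq_div]
  gcongr

/-- The `n`-th term of the left-hand side of the `k`-th equation, as a function of `δ_n = d`. -/
noncomputable def hbI (k n : ℕ) (d : ℝ) : ℝ :=
  ∫ y in (0 : ℝ)..d, Real.cos (Real.pi * y) *
    (1 / ((n : ℝ) + 1 / 2 - y - k) + 1 / ((n : ℝ) + 1 / 2 - y + k))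

/-- The part of `hbI` that is not linear in `sin (π d) / π`. -/
noncomputable def hbE (k n : ℕ) (d : ℝ) : ℝ :=
  hbI k n d - Real.sin (Real.pi * d) / Real.pi * hbA k n

/-- The function controlling the size and the variation of the nonlinear parts `hbE`. -/
noncomputable def hbG (d : ℝ) : ℝ := ∫ y in (0 : ℝ)..d, |y| * Real.cos (Real.pi * y)

lemma half_le_abs_sub (k n : ℕ) : 1 / 2 ≤ |(n : ℝ) + 1 / 2 - k| := by
  have := half_le_abs (n - k)
  push_cast at this
  convert this using 2
  ring

lemma half_le_abs_add (k n : ℕ) : 1 / 2 ≤ |(n : ℝ) + 1 / 2 + k| := by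
  have := half_le_abs (n + k)
  push_cast at this
  convert this using 2
  ring

lemma sub_ne_zero_of_half {x y : ℝ} (hx : 1 / 2 ≤ |x|) (hy : |y| ≤ 0.13) : x - y ≠ 0 := by
  intro h
  rw [sub_eq_zero.1 h] at hx
  norm_num at hx hy
  linarith

lemma hbI_intervalIntegrable (k n : ℕ) {a b : ℝ} (ha : |a| ≤ 0.13) (hb : |b| ≤ 0.13) :
    IntervalIntegrable (fun y => Real.cos (Real.pi * y) *
      (1 / ((n : ℝ) + 1 / 2 - y - k) + 1 / ((n : ℝ) + 1 / 2 - y + k)))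
      MeasureTheory.volume a b := by
  apply ContinuousOn.intervalIntegrable
  have h1 : ∀ y ∈ Set.uIcc a b, (n : ℝ) + 1 / 2 - y - k ≠ 0 := fun y hy => by
    have := sub_ne_zero_of_half (half_le_abs_sub k n) (abs_le_of_mem_uIcc ha hb hy)
    convert this using 1; ring
  have h2 : ∀ y ∈ Set.uIcc a b, (n : ℝ) + 1 / 2 - y + k ≠ 0 := fun y hy => by
    have := sub_ne_zero_of_half (half_le_abs_add k n) (abs_le_of_mem_uIcc ha hb hy)
    convert this using 1; ring
  fun_prop (disch := assumption)

open intervalIntegral in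
/-- The variation of the nonlinear terms is dominated by the kernel. -/
lemma hbE_sub_le (k n : ℕ) {a b : ℝ} (ha : |a| ≤ 0.13) (hb : |b| ≤ 0.13) :
    |hbE k n b - hbE k n a| ≤ hbK k n * |hbG b - hbG a| := by
  have hz : |(0 : ℝ)| ≤ 0.13 := by norm_num
  have hc : ∀ a b : ℝ, IntervalIntegrable (fun y => |y| * Real.cos (Real.pi * y))
      MeasureTheory.volume a b := fun a b => Continuous.intervalIntegrable (by fun_prop) _ _
  have hc' : ∀ a b : ℝ, IntervalIntegrable (fun y => Real.cos (Real.pi * y) * hbA k n)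
      MeasureTheory.volume a b := fun a b => Continuous.intervalIntegrable (by fun_prop) _ _
  have e1 : hbE k n b - hbE k n a = ∫ y in a..b, (Real.cos (Real.pi * y) *
      (1 / ((n : ℝ) + 1 / 2 - y - k) + 1 / ((n : ℝ) + 1 / 2 - y + k)) -
      Real.cos (Real.pi * y) * hbA k n) := by
    rw [integral_sub (hbI_intervalIntegrable k n ha hb) (hc' a b), integral_mul_const,
      integral_cos_pi, ← integral_interval_sub_left (hbI_intervalIntegrable k n hz hb)
        (hbI_intervalIntegrable k n hz ha)]
    unfold hbE hbI
    ring
  have e2 : hbK k n * |hbG b - hbG a| =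
      |∫ y in a..b, hbK k n * (|y| * Real.cos (Real.pi * y))| := by
    rw [integral_const_mul, abs_mul, abs_of_nonneg (hbK_nonneg k n)]
    unfold hbG
    rw [integral_interval_sub_left (hc 0 b) (hc 0 a)]
  rw [e1, e2]
  refine (Real.norm_eq_abs _).ge.trans (norm_integral_le_abs_of_norm_le ?_ ((hc a b).const_mul _))
  rw [MeasureTheory.ae_restrict_iff' measurableSet_uIoc]
  refine Filter.Eventually.of_forall fun y hy => ?_
  have hy' := abs_le_of_mem_uIcc ha hb (Set.uIoc_subset_uIcc hy)
  rw [← mul_sub, Real.norm_eq_abs, abs_mul, abs_of_nonneg (cos_pi_nonneg hy')]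
  have h1 := hbκ_bound (half_le_abs_sub k n) hy'
  have h2 := hbκ_bound (half_le_abs_add k n) hy'
  have h3 : |1 / ((n : ℝ) + 1 / 2 - y - k) + 1 / ((n : ℝ) + 1 / 2 - y + k) - hbA k n| ≤
      hbK k n * |y| := by
    have e3 : 1 / ((n : ℝ) + 1 / 2 - y - k) + 1 / ((n : ℝ) + 1 / 2 - y + k) - hbA k n =
        (1 / ((n : ℝ) + 1 / 2 - k - y) - 1 / ((n : ℝ) + 1 / 2 - k)) +
        (1 / ((n : ℝ) + 1 / 2 + k - y) - 1 / ((n : ℝ) + 1 / 2 + k)) := by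
      unfold hbA
      rw [show (n : ℝ) + 1 / 2 - y - k = n + 1 / 2 - k - y by ring,
        show (n : ℝ) + 1 / 2 - y + k = n + 1 / 2 + k - y by ring]
      ring
    rw [e3, hbK, add_mul]
    exact (abs_add_le _ _).trans (add_le_add h1 h2)
  calc _ ≤ Real.cos (Real.pi * y) * (hbK k n * |y|) :=
        mul_le_mul_of_nonneg_left h3 (cos_pi_nonneg hy')
    _ = _ := by ring

open intervalIntegral in
lemma hbG_sub_le {a b : ℝ} (ha : |a| ≤ 0.13) (hb : |b| ≤ 0.13) :
    |hbG b - hbG a| ≤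
      0.13 * |Real.sin (Real.pi * b) / Real.pi - Real.sin (Real.pi * a) / Real.pi| := by
  have hc : ∀ a b : ℝ, IntervalIntegrable (fun y => |y| * Real.cos (Real.pi * y))
      MeasureTheory.volume a b := fun a b => Continuous.intervalIntegrable (by fun_prop) _ _
  have e2 : (0.13 : ℝ) * |Real.sin (Real.pi * b) / Real.pi - Real.sin (Real.pi * a) / Real.pi| =
      |∫ y in a..b, 0.13 * Real.cos (Real.pi * y)| := by
    rw [integral_const_mul, abs_mul, abs_of_nonneg (by norm_num : (0 : ℝ) ≤ 0.13),
      integral_cos_pi]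
  unfold hbG
  rw [integral_interval_sub_left (hc 0 b) (hc 0 a), e2]
  refine (Real.norm_eq_abs _).ge.trans (norm_integral_le_abs_of_norm_le ?_
    (Continuous.intervalIntegrable (by fun_prop) _ _))
  rw [MeasureTheory.ae_restrict_iff' measurableSet_uIoc]
  refine Filter.Eventually.of_forall fun y hy => ?_
  have hy' := abs_le_of_mem_uIcc ha hb (Set.uIoc_subset_uIcc hy)
  rw [Real.norm_eq_abs, abs_mul, abs_abs, abs_of_nonneg (cos_pi_nonneg hy')]
  exact mul_le_mul_of_nonneg_right hy' (cos_pi_nonneg hy')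

lemma integral_mul_cos_pi (d : ℝ) : ∫ y in (0 : ℝ)..d, y * Real.cos (Real.pi * y) =
    d * (Real.sin (Real.pi * d) / Real.pi) - (1 - Real.cos (Real.pi * d)) / Real.pi ^ 2 := by
  have hd : ∀ y : ℝ, HasDerivAt (fun y => y * (Real.sin (Real.pi * y) / Real.pi) +
      Real.cos (Real.pi * y) / Real.pi ^ 2) (y * Real.cos (Real.pi * y)) y := by
    intro y
    have h0 : HasDerivAt (fun y => Real.pi * y) Real.pi y := by
      simpa using (hasDerivAt_id y).const_mul Real.pi
    have hpi := Real.pi_ne_zero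
    refine (((hasDerivAt_id' y).fun_mul (h0.sin.div_const Real.pi)).fun_add
      (h0.cos.div_const (Real.pi ^ 2))).congr_deriv ?_
    field_simp
    ring
  rw [intervalIntegral.integral_eq_sub_of_hasDerivAt (fun y _ => hd y)
    (Continuous.intervalIntegrable (by fun_prop) _ _)]
  simp
  ring

/-- A bound for `∫₀ˣ t cos t dt = x sin x - (1 - cos x)`, proved through the half-angle
formulas. -/
lemma abs_mul_sin_sub_le {x : ℝ} (hx : 0 ≤ x) (hx1 : x ≤ 1) :
    |x * Real.sin x - (1 - Real.cos x)| ≤ x * Real.sin x / 2 := by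
  obtain ⟨h, rfl⟩ : ∃ h, x = 2 * h := ⟨x / 2, by ring⟩
  have h0 : 0 ≤ h := by linarith
  have hpi := Real.pi_gt_three
  have hs : 0 ≤ Real.sin h := Real.sin_nonneg_of_nonneg_of_le_pi h0 (by linarith)
  have hsl : Real.sin h ≤ h := Real.sin_le h0
  have hcos : 1 / 2 ≤ Real.cos h := by
    nlinarith [Real.one_sub_sq_div_two_le_cos (x := h)]
  have ht : h * Real.cos h ≤ Real.sin h := by
    have := Real.le_tan h0 (by linarith)
    rwa [Real.tan_eq_sin_div_cos, le_div_iff₀ (by linarith)] at this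
  have e : 1 - Real.cos (2 * h) = 2 * Real.sin h ^ 2 := by
    rw [Real.cos_two_mul, Real.cos_sq']; ring
  rw [e, Real.sin_two_mul, abs_le]
  constructor
  · have : Real.sin h ≤ 3 * (h * Real.cos h) := by nlinarith
    nlinarith
  · nlinarith

/-- Compared with `hbG_sub_le` at `a = 0`, integrating exactly gains a factor `2`. -/
lemma abs_hbG_le {d : ℝ} (hd : |d| ≤ 0.13) :
    |hbG d| ≤ 0.065 * |Real.sin (Real.pi * d) / Real.pi| := by
  have hpi := Real.pi_pos
  have hpi4 := Real.pi_le_four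
  have e : |hbG d| = |∫ y in (0 : ℝ)..d, y * Real.cos (Real.pi * y)| := by
    unfold hbG
    rcases le_total 0 d with h | h
    · congr 1
      apply intervalIntegral.integral_congr
      intro y hy
      rw [Set.uIcc_of_le h] at hy
      simp only [abs_of_nonneg hy.1]
    · rw [← abs_neg (∫ y in (0 : ℝ)..d, y * Real.cos (Real.pi * y)),
        ← intervalIntegral.integral_neg]
      congr 1
      apply intervalIntegral.integral_congr
      intro y hy
      rw [Set.uIcc_of_ge h] at hy
      simp only [abs_of_nonpos hy.2, neg_mul]
  rw [e, integral_mul_cos_pi]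
  have key : ∀ d : ℝ, 0 ≤ d → d ≤ 0.13 →
      |d * (Real.sin (Real.pi * d) / Real.pi) - (1 - Real.cos (Real.pi * d)) / Real.pi ^ 2| ≤
      0.065 * |Real.sin (Real.pi * d) / Real.pi| := by
    intro d h0 h1
    norm_num at h1
    have hx0 : 0 ≤ Real.pi * d := by positivity
    have hx1 : Real.pi * d ≤ 1 := by nlinarith
    have hs : 0 ≤ Real.sin (Real.pi * d) :=
      Real.sin_nonneg_of_nonneg_of_le_pi hx0 (by linarith [Real.pi_gt_three])
    have h := abs_mul_sin_sub_le hx0 hx1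
    have e1 : d * (Real.sin (Real.pi * d) / Real.pi) - (1 - Real.cos (Real.pi * d)) / Real.pi ^ 2
        = (Real.pi * d * Real.sin (Real.pi * d) - (1 - Real.cos (Real.pi * d))) / Real.pi ^ 2 := by
      field_simp
    rw [e1, abs_div, abs_of_pos (by positivity : 0 < Real.pi ^ 2),
      abs_of_nonneg (by positivity : 0 ≤ Real.sin (Real.pi * d) / Real.pi), div_le_iff₀ (by positivity)]
    refine h.trans ?_
    have e2 : 0.065 * (Real.sin (Real.pi * d) / Real.pi) * Real.pi ^ 2 =
        Real.pi * 0.13 * Real.sin (Real.pi * d) / 2 := by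
      field_simp; ring
    rw [e2]
    gcongr
    norm_num; linarith
  rcases le_total 0 d with h | h
  · exact key d h (by rwa [abs_of_nonneg h] at hd)
  · have := key (-d) (by linarith) (by rwa [abs_of_nonpos h] at hd)
    rw [mul_neg, Real.sin_neg, Real.cos_neg, neg_div, neg_mul_neg, abs_neg] at this
    exact this

/-! ### Truncation and the inverse of the substitution -/

/-- Truncation to `[-0.126, 0.126]`. -/
noncomputable def hbClamp (s : ℝ) : ℝ := max (-0.126) (min s 0.126)

/-- The value `φ` in `[-1/2, 1/2]` with `sin (π φ) / π` equal to the truncation of `s`. -/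
noncomputable def hbφ (s : ℝ) : ℝ := Real.arcsin (Real.pi * hbClamp s) / Real.pi

lemma hbClamp_of_abs_le {s : ℝ} (hs : |s| ≤ 0.126) : hbClamp s = s := by
  rw [abs_le] at hs
  rw [hbClamp, min_eq_left hs.2, max_eq_right hs.1]

lemma abs_hbClamp_le (s : ℝ) : |hbClamp s| ≤ 0.126 := by
  rw [abs_le]
  exact ⟨le_max_left _ _, max_le (by norm_num) (min_le_right _ _)⟩

lemma abs_hbClamp_sub_le (s t : ℝ) : |hbClamp s - hbClamp t| ≤ |s - t| := by
  unfold hbClamp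
  refine (abs_max_sub_max_le_max _ _ _ _).trans ?_
  rw [sub_self, abs_zero]
  refine max_le (abs_nonneg _) ((abs_min_sub_min_le_max _ _ _ _).trans ?_)
  rw [sub_self, abs_zero]
  exact max_le le_rfl (abs_nonneg _)

lemma hbClamp_zero : hbClamp 0 = 0 := hbClamp_of_abs_le (by norm_num)

lemma hbφ_zero : hbφ 0 = 0 := by simp [hbφ, hbClamp_zero]

lemma abs_hbφ_le (s : ℝ) : |hbφ s| ≤ 0.13 / 0.126 * |hbClamp s| := by
  have hpi := Real.pi_pos
  have hpi4 := Real.pi_lt_d4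
  have key : ∀ u : ℝ, 0 ≤ u → u ≤ 0.126 →
      |Real.arcsin (Real.pi * u) / Real.pi| ≤ 0.13 / 0.126 * u := by
    intro u h0 h1
    norm_num at h1
    have hnn : 0 ≤ Real.arcsin (Real.pi * u) := Real.arcsin_nonneg.2 (by positivity)
    rw [abs_of_nonneg (by positivity), div_le_iff₀ hpi]
    set x := 0.13 / 0.126 * u * Real.pi with hx
    have hx0 : 0 ≤ x := by positivity
    have hx1 : x ≤ 0.4085 := by
      rw [hx]; norm_num at hpi4 ⊢; nlinarith
    norm_num at hx1
    rw [Real.arcsin_le_iff_le_sin']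
    · refine le_trans ?_ (Real.sin_ge_sub_cube hx0)
      have : Real.pi * u = 0.126 / 0.13 * x := by rw [hx]; ring
      rw [this]
      have : x ^ 2 ≤ (817 / 2000) ^ 2 := by gcongr
      norm_num at this ⊢
      nlinarith
    · constructor <;> linarith [Real.pi_gt_three]
  have hc := abs_hbClamp_le s
  unfold hbφ
  rcases le_total 0 (hbClamp s) with h | h
  · rw [abs_of_nonneg h] at *
    exact key _ h hc
  · rw [abs_of_nonpos h] at *
    have := key _ (by linarith : 0 ≤ -hbClamp s) hc
    rwa [mul_neg, Real.arcsin_neg, neg_div, abs_neg] at this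

lemma abs_hbφ_le' (s : ℝ) : |hbφ s| ≤ 0.13 := by
  refine (abs_hbφ_le s).trans ?_
  have := abs_hbClamp_le s
  norm_num at this ⊢
  linarith

lemma sin_hbφ (s : ℝ) : Real.sin (Real.pi * hbφ s) / Real.pi = hbClamp s := by
  have hpi := Real.pi_pos
  have hpi4 := Real.pi_le_four
  have hc := abs_le.1 (abs_hbClamp_le s)
  norm_num at hc
  rw [hbφ, mul_div_cancel₀ _ hpi.ne', Real.sin_arcsin (by nlinarith [hc.1]) (by nlinarith [hc.2]),
    mul_div_cancel_left₀ _ hpi.ne']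

/-! ### The right-hand side -/

/-- The right-hand side of the `k`-th equation. -/
noncomputable def hbRhs (k : ℕ) : ℝ :=
  1 / Real.pi * ∫ x in (-(1 / 2) : ℝ)..(1 / 2), Real.cos (Real.pi * x) / (x - (k : ℝ)) ^ 2

/-- A quartic majorant. The coefficient `7.6` is a round number above the least one making this
hold up to `z² = 1/4`. -/
lemma inv_sq_symm_le {z : ℝ} (hz : z ^ 2 ≤ 1 / 4) :
    1 / (z - 1) ^ 2 + 1 / (z + 1) ^ 2 ≤ 2 * (1 + 3 * z ^ 2 + 7.6 * z ^ 4) := by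
  have h1 : z - 1 ≠ 0 := by
    intro h; rw [sub_eq_zero.1 h] at hz; norm_num at hz
  have h2 : z + 1 ≠ 0 := by
    intro h; rw [eq_neg_of_add_eq_zero_left h] at hz; norm_num at hz
  have e : 1 / (z - 1) ^ 2 + 1 / (z + 1) ^ 2 = 2 * (1 + z ^ 2) / ((z - 1) ^ 2 * (z + 1) ^ 2) := by
    field_simp; ring
  rw [e, div_le_iff₀ (by positivity)]
  have h3 : 0 ≤ 2.6 - 12.2 * z ^ 2 + 7.6 * z ^ 4 := by
    norm_num
    nlinarith [mul_nonneg (sub_nonneg.2 hz) (sub_nonneg.2 hz)]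
  have h4 : 0 ≤ 2 * z ^ 4 * (2.6 - 12.2 * z ^ 2 + 7.6 * z ^ 4) := by positivity
  norm_num at h4 ⊢
  linarith

lemma rhs_integrand_le {k : ℕ} (hk : 1 ≤ k) {x : ℝ} (hx : x ^ 2 ≤ 1 / 4) :
    1 / (x - k) ^ 2 + 1 / (x + k) ^ 2 ≤
      2 / (k : ℝ) ^ 2 + 6 / (k : ℝ) ^ 4 * x ^ 2 + 15.2 / (k : ℝ) ^ 6 * x ^ 4 := by
  have hk' : (1 : ℝ) ≤ k := by exact_mod_cast hk
  have hk0 : (k : ℝ) ≠ 0 := by positivity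
  have hz : (x / k) ^ 2 ≤ 1 / 4 := by
    rw [div_pow, div_le_iff₀ (by positivity)]
    nlinarith
  have h := mul_le_mul_of_nonneg_left (inv_sq_symm_le hz) (by positivity : 0 ≤ 1 / (k : ℝ) ^ 2)
  have e1 : x - k = k * (x / k - 1) := by field_simp
  have e2 : x + k = k * (x / k + 1) := by field_simp
  calc _ = 1 / (k : ℝ) ^ 2 * (1 / (x / k - 1) ^ 2 + 1 / (x / k + 1) ^ 2) := by
        rw [e1, e2, mul_pow, mul_pow, ← one_div_mul_one_div, ← one_div_mul_one_div]
        ring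
    _ ≤ _ := h
    _ = _ := by field_simp; ring

lemma integral_quartic_cos (A B C : ℝ) :
    ∫ x in (-(1 / 2) : ℝ)..(1 / 2), (A + B * x ^ 2 + C * x ^ 4) * Real.cos (Real.pi * x) =
      A * (2 / Real.pi) + B * (1 / (2 * Real.pi) - 4 / Real.pi ^ 3) +
        C * (1 / (8 * Real.pi) - 6 / Real.pi ^ 3 + 48 / Real.pi ^ 5) := by
  have hpi := Real.pi_ne_zero
  have hd : ∀ x : ℝ, HasDerivAt (fun x =>
      ((A + B * x ^ 2 + C * x ^ 4) / Real.pi - (2 * B + 12 * C * x ^ 2) / Real.pi ^ 3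
        + 24 * C / Real.pi ^ 5) * Real.sin (Real.pi * x) +
      ((2 * B * x + 4 * C * x ^ 3) / Real.pi ^ 2 - 24 * C * x / Real.pi ^ 4) *
        Real.cos (Real.pi * x))
      ((A + B * x ^ 2 + C * x ^ 4) * Real.cos (Real.pi * x)) x := by
    intro x
    have h0 : HasDerivAt (fun y => Real.pi * y) Real.pi x := by
      simpa using (hasDerivAt_id x).const_mul Real.pi
    have hp : HasDerivAt (fun x : ℝ => (A + B * x ^ 2 + C * x ^ 4) / Real.pi -
        (2 * B + 12 * C * x ^ 2) / Real.pi ^ 3 + 24 * C / Real.pi ^ 5)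
        ((2 * B * x + 4 * C * x ^ 3) / Real.pi - 24 * C * x / Real.pi ^ 3) x := by
      have h2 := (hasDerivAt_id' x).fun_pow 2
      have h4 := (hasDerivAt_id' x).fun_pow 4
      refine ((((((h2.const_mul B).const_add A).fun_add (h4.const_mul C)).div_const
        Real.pi).fun_sub (((h2.const_mul (12 * C)).const_add (2 * B)).div_const
        (Real.pi ^ 3))).add_const (24 * C / Real.pi ^ 5)).congr_deriv ?_
      norm_num
      ring
    have hq : HasDerivAt (fun x : ℝ => (2 * B * x + 4 * C * x ^ 3) / Real.pi ^ 2 -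
        24 * C * x / Real.pi ^ 4)
        ((2 * B + 12 * C * x ^ 2) / Real.pi ^ 2 - 24 * C / Real.pi ^ 4) x := by
      have h1 := hasDerivAt_id' x
      have h3 := (hasDerivAt_id' x).fun_pow 3
      refine ((((h1.const_mul (2 * B)).fun_add (h3.const_mul (4 * C))).div_const
        (Real.pi ^ 2)).fun_sub ((h1.const_mul (24 * C)).div_const (Real.pi ^ 4))).congr_deriv ?_
      norm_num
      ring
    refine ((hp.fun_mul h0.sin).fun_add (hq.fun_mul h0.cos)).congr_deriv ?_
    field_simp
    ring
  rw [intervalIntegral.integral_eq_sub_of_hasDerivAt (fun y _ => hd y)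
    (Continuous.intervalIntegrable (by fun_prop) _ _)]
  have e1 : Real.pi * (1 / 2) = Real.pi / 2 := by ring
  have e2 : Real.pi * (-(1 / 2)) = -(Real.pi / 2) := by ring
  rw [e1, e2, Real.sin_neg, Real.cos_neg, Real.sin_pi_div_two, Real.cos_pi_div_two]
  field_simp
  ring

open intervalIntegral in
/-- The right-hand side is symmetrised in `x`, and the quartic majorant is integrated against
the cosine. -/
lemma hbRhs_le {k : ℕ} (hk : 1 ≤ k) :
    0 ≤ hbRhs k ∧ hbRhs k ≤ 1 / (k : ℝ) ^ 2 *
      (2 / Real.pi ^ 2 + 3 / (k : ℝ) ^ 2 * (1 / (2 * Real.pi ^ 2) - 4 / Real.pi ^ 4) +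
        7.6 / (k : ℝ) ^ 4 * (1 / (8 * Real.pi ^ 2) - 6 / Real.pi ^ 4 + 48 / Real.pi ^ 6)) := by
  have hpi := Real.pi_pos
  have hk' : (1 : ℝ) ≤ k := by exact_mod_cast hk
  have hk0 : (k : ℝ) ≠ 0 := by positivity
  have hle : (-(1 / 2) : ℝ) ≤ 1 / 2 := by norm_num
  have hcos : ∀ x ∈ Set.Icc (-(1 / 2) : ℝ) (1 / 2), 0 ≤ Real.cos (Real.pi * x) := fun x hx =>
    Real.cos_nonneg_of_mem_Icc ⟨by nlinarith [hx.1], by nlinarith [hx.2]⟩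
  have hi1 : IntervalIntegrable (fun x => Real.cos (Real.pi * x) / (x - (k : ℝ)) ^ 2)
      MeasureTheory.volume (-(1 / 2) : ℝ) (1 / 2) := by
    apply ContinuousOn.intervalIntegrable
    rw [Set.uIcc_of_le hle]
    have : ∀ x ∈ Set.Icc (-(1 / 2) : ℝ) (1 / 2), (x - (k : ℝ)) ^ 2 ≠ 0 := fun x hx =>
      pow_ne_zero _ (by linarith [hx.2] : x - (k : ℝ) < 0).ne
    fun_prop (disch := assumption)
  have hi2 : IntervalIntegrable (fun x => Real.cos (Real.pi * x) / (x + (k : ℝ)) ^ 2)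
      MeasureTheory.volume (-(1 / 2) : ℝ) (1 / 2) := by
    apply ContinuousOn.intervalIntegrable
    rw [Set.uIcc_of_le hle]
    have : ∀ x ∈ Set.Icc (-(1 / 2) : ℝ) (1 / 2), (x + (k : ℝ)) ^ 2 ≠ 0 := fun x hx =>
      pow_ne_zero _ (by linarith [hx.1] : 0 < x + (k : ℝ)).ne'
    fun_prop (disch := assumption)
  have hsym : ∫ x in (-(1 / 2) : ℝ)..(1 / 2), Real.cos (Real.pi * x) / (x + (k : ℝ)) ^ 2 =
      ∫ x in (-(1 / 2) : ℝ)..(1 / 2), Real.cos (Real.pi * x) / (x - (k : ℝ)) ^ 2 := by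
    have h := integral_comp_neg (a := -(1 / 2)) (b := 1 / 2)
      (fun x : ℝ => Real.cos (Real.pi * x) / (x - (k : ℝ)) ^ 2)
    rw [neg_neg] at h
    rw [← h]
    congr 1
    funext x
    rw [mul_neg, Real.cos_neg]
    congr 1
    ring
  refine ⟨mul_nonneg (by positivity) (integral_nonneg hle fun x hx => ?_), ?_⟩
  · exact div_nonneg (hcos x hx) (sq_nonneg _)
  have hmono := integral_mono_on hle (hi1.add hi2)
    (g := fun x => (2 / (k : ℝ) ^ 2 + 6 / (k : ℝ) ^ 4 * x ^ 2 + 15.2 / (k : ℝ) ^ 6 * x ^ 4) *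
      Real.cos (Real.pi * x))
    (Continuous.intervalIntegrable (by fun_prop) _ _) (fun x hx => by
      have hx2 : x ^ 2 ≤ 1 / 4 := by nlinarith [hx.1, hx.2]
      have := mul_le_mul_of_nonneg_right (rhs_integrand_le hk hx2) (hcos x hx)
      refine le_trans (le_of_eq ?_) this
      ring)
  rw [integral_quartic_cos, integral_add hi1 hi2, hsym] at hmono
  have h2 : hbRhs k = 1 / (2 * Real.pi) *
      ((∫ x in (-(1 / 2) : ℝ)..(1 / 2), Real.cos (Real.pi * x) / (x - (k : ℝ)) ^ 2) +
      ∫ x in (-(1 / 2) : ℝ)..(1 / 2), Real.cos (Real.pi * x) / (x - (k : ℝ)) ^ 2) := by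
    unfold hbRhs
    field_simp
    ring
  rw [h2]
  refine (mul_le_mul_of_nonneg_left hmono (by positivity)).trans (le_of_eq ?_)
  field_simp
  ring

lemma hbRhs_numeric {k : ℕ} (hk : 1 ≤ k) :
    0 ≤ hbRhs k ∧ hbRhs k ≤ 1 / (k : ℝ) ^ 2 * (0.20266 + 0.0289 / (k : ℝ) ^ 2 +
      0.0077 / (k : ℝ) ^ 4) := by
  have hpi := Real.pi_pos
  obtain ⟨h0, h⟩ := hbRhs_le hk
  refine ⟨h0, h.trans ?_⟩
  set q := 1 / Real.pi ^ 2 with hq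
  have hg := Real.pi_gt_d6
  have hl := Real.pi_lt_d6
  have hq1 : 0.1013211 ≤ q := by
    rw [hq, le_div_iff₀ (by positivity)]
    nlinarith
  have hq2 : q ≤ 0.1013213 := by
    rw [hq, div_le_iff₀ (by positivity)]
    nlinarith
  have e0 : 2 / Real.pi ^ 2 = 2 * q := by rw [hq]; ring
  have e1 : 1 / (2 * Real.pi ^ 2) - 4 / Real.pi ^ 4 = q / 2 - 4 * q ^ 2 := by
    rw [hq]; field_simp
  have e2 : 1 / (8 * Real.pi ^ 2) - 6 / Real.pi ^ 4 + 48 / Real.pi ^ 6 =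
      q / 8 - 6 * q ^ 2 + 48 * q ^ 3 := by
    rw [hq]; field_simp
  have hs1 : 0.1013211 ^ 2 ≤ q ^ 2 := by gcongr
  have hs3 : q ^ 3 ≤ 0.1013213 ^ 3 := by gcongr
  rw [e0, e1, e2]
  have a0 : 2 * q ≤ 0.20266 := by norm_num at *; linarith
  have a1 : 3 * (q / 2 - 4 * q ^ 2) ≤ 0.0289 := by norm_num at *; linarith
  have a2 : 7.6 * (q / 8 - 6 * q ^ 2 + 48 * q ^ 3) ≤ 0.0077 := by norm_num at *; linarith
  calc _ = 1 / (k : ℝ) ^ 2 * (2 * q + 3 * (q / 2 - 4 * q ^ 2) / (k : ℝ) ^ 2 +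
        7.6 * (q / 8 - 6 * q ^ 2 + 48 * q ^ 3) / (k : ℝ) ^ 4) := by ring
    _ ≤ _ := by gcongr

/-- The term `k = 1` is bounded separately, the others by `0.2105 / k²` and `ζ(4) = π⁴/90`. -/
lemma hbRhs_sq : (Summable fun k : ℕ => hbRhs (k + 1) ^ 2) ∧
    ∑' k : ℕ, hbRhs (k + 1) ^ 2 ≤ 0.0625 := by
  have hz := (hasSum_nat_add_iff' 2).2 hasSum_zeta_four
  have hpi := Real.pi_pos
  have hl := Real.pi_lt_d4
  have hz2 : Real.pi ^ 4 / 90 - ∑ i ∈ Finset.range 2, 1 / (i : ℝ) ^ 4 ≤ 0.0825 := by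
    have : Real.pi ^ 4 ≤ 3.1416 ^ 4 := by gcongr
    simp [Finset.sum_range_succ]
    norm_num at this ⊢
    linarith
  have hb : ∀ k : ℕ, hbRhs (k + 1 + 1) ^ 2 ≤ 0.2105 ^ 2 * (1 / ((k + 2 : ℕ) : ℝ) ^ 4) := by
    intro k
    obtain ⟨h0, h1⟩ := hbRhs_numeric (k := k + 2) (by omega)
    have hk : (2 : ℝ) ≤ ((k + 2 : ℕ) : ℝ) := by push_cast; linarith [(Nat.cast_nonneg k : (0:ℝ) ≤ k)]
    have h2 : hbRhs (k + 2) ≤ 0.2105 * (1 / ((k + 2 : ℕ) : ℝ) ^ 2) := by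
      refine h1.trans ?_
      rw [mul_comm]
      gcongr
      have b1 : 0.0289 / ((k + 2 : ℕ) : ℝ) ^ 2 ≤ 0.0289 / 2 ^ 2 := by gcongr
      have b2 : 0.0077 / ((k + 2 : ℕ) : ℝ) ^ 4 ≤ 0.0077 / 2 ^ 4 := by gcongr
      norm_num at b1 b2 ⊢
      linarith
    calc _ ≤ (0.2105 * (1 / ((k + 2 : ℕ) : ℝ) ^ 2)) ^ 2 := by gcongr
      _ = _ := by ring
  have hs : Summable fun k : ℕ => hbRhs (k + 1 + 1) ^ 2 :=
    Summable.of_nonneg_of_le (fun k => sq_nonneg _) hb (hz.summable.mul_left _)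
  have hle := hasSum_le hb hs.hasSum (hz.mul_left (0.2105 ^ 2))
  have hs' : Summable fun k : ℕ => hbRhs (k + 1) ^ 2 :=
    (summable_nat_add_iff (f := fun k : ℕ => hbRhs (k + 1) ^ 2) 1).1 hs
  refine ⟨hs', ?_⟩
  rw [hs'.tsum_eq_zero_add]
  obtain ⟨h0, h1⟩ := hbRhs_numeric (k := 1) le_rfl
  have h2 : hbRhs (0 + 1) ≤ 0.2393 := by
    refine h1.trans ?_
    norm_num
  have h3 : hbRhs (0 + 1) ^ 2 ≤ 0.2393 ^ 2 := by gcongr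
  norm_num at h3 hle hz2 ⊢
  linarith

/-! ### The fixed point -/

lemma hbE_zero (k n : ℕ) : hbE k n 0 = 0 := by simp [hbE, hbI]

lemma hbG_zero : hbG 0 = 0 := by simp [hbG]

/-- The nonlinear part of the system, in the unknowns `s_n = sin (π δ_n) / π`. -/
noncomputable def hbN (s : HbH) (k : ℕ) : ℝ := ∑' n, hbE (k + 1) n (hbφ (s n))

lemma abs_hbG_hbφ_le (u : ℝ) : |hbG (hbφ u)| ≤ 0.065 * |u| := by
  refine (abs_hbG_le (abs_hbφ_le' u)).trans ?_
  rw [sin_hbφ]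
  have := abs_hbClamp_sub_le u 0
  rw [hbClamp_zero, sub_zero, sub_zero] at this
  gcongr

lemma abs_hbG_hbφ_sub_le (u v : ℝ) : |hbG (hbφ u) - hbG (hbφ v)| ≤ 0.13 * |u - v| := by
  refine (hbG_sub_le (abs_hbφ_le' v) (abs_hbφ_le' u)).trans ?_
  rw [sin_hbφ, sin_hbφ]
  have := abs_hbClamp_sub_le u v
  gcongr

/-- A sequence dominated by a multiple of an `ℓ²` vector is square-summable, with norm bound. -/
lemma sq_summable_of_le {x : ℕ → ℝ} {C : ℝ} {s : HbH} (h : ∀ n, |x n| ≤ C * |s n|) :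
    (Summable fun n => x n ^ 2) ∧ ∑' n, x n ^ 2 ≤ C ^ 2 * ‖s‖ ^ 2 := by
  have hle : ∀ n, x n ^ 2 ≤ C ^ 2 * s n ^ 2 := fun n => by
    rw [← sq_abs, ← sq_abs (s n), ← mul_pow]
    exact pow_le_pow_left₀ (abs_nonneg _) (h n) 2
  have hs := (hbH_summable s).mul_left (C ^ 2)
  have hx := Summable.of_nonneg_of_le (fun n => sq_nonneg _) hle hs
  refine ⟨hx, ?_⟩
  rw [hbH_norm_sq, ← tsum_mul_left]
  exact hx.tsum_le_tsum hle hs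

lemma hbE_summable (s : HbH) (k : ℕ) : Summable fun n => hbE (k + 1) n (hbφ (s n)) := by
  have hx := (sq_summable_of_le (x := fun n => hbG (hbφ (s n))) (s := s)
    fun n => abs_hbG_hbφ_le (s n)).1
  refine Summable.of_norm_bounded (hbK_summable hx (k + 1)) fun n => ?_
  have := hbE_sub_le (k + 1) n (a := 0) (by norm_num) (abs_hbφ_le' (s n))
  simpa [hbE_zero, hbG_zero] using this

lemma abs_hbN_sub_le (s t : HbH) (k : ℕ) : |hbN s k - hbN t k| ≤
    ∑' n, hbK (k + 1) n * |hbG (hbφ (s n)) - hbG (hbφ (t n))| := by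
  have hx := (sq_summable_of_le (x := fun n => hbG (hbφ (s n)) - hbG (hbφ (t n))) (s := s - t)
    fun n => by simpa using abs_hbG_hbφ_sub_le (s n) (t n)).1
  unfold hbN
  rw [← (hbE_summable s k).tsum_sub (hbE_summable t k), ← Real.norm_eq_abs]
  exact tsum_of_norm_bounded (hbK_summable hx (k + 1)).hasSum fun n =>
    hbE_sub_le (k + 1) n (abs_hbφ_le' (t n)) (abs_hbφ_le' (s n))

lemma hbN_zero (k : ℕ) : hbN 0 k = 0 := by
  simp [hbN, hbφ_zero, hbE_zero]

lemma abs_hbN_le (s : HbH) (k : ℕ) :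
    |hbN s k| ≤ ∑' n, hbK (k + 1) n * |hbG (hbφ (s n))| := by
  simpa [hbN_zero, hbφ_zero, hbG_zero] using abs_hbN_sub_le s 0 k

lemma hbN_schur (s : HbH) : (Summable fun k => hbN s k ^ 2) ∧
    ∑' k, hbN s k ^ 2 ≤ (12.851 * 0.065 * ‖s‖) ^ 2 := by
  obtain ⟨h1, h2⟩ := sq_summable_of_le (x := fun n => hbG (hbφ (s n))) (s := s)
    fun n => abs_hbG_hbφ_le (s n)
  obtain ⟨h3, h4⟩ := hbK_schur h1 (abs_hbN_le s)
  refine ⟨h3, h4.trans ?_⟩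
  rw [mul_pow, mul_pow, mul_assoc]
  gcongr

lemma hbN_sub_schur (s t : HbH) :
    ∑' k, (hbN s k - hbN t k) ^ 2 ≤ (12.851 * 0.13 * ‖s - t‖) ^ 2 := by
  obtain ⟨h1, h2⟩ := sq_summable_of_le (x := fun n => hbG (hbφ (s n)) - hbG (hbφ (t n)))
    (s := s - t) fun n => by simpa using abs_hbG_hbφ_sub_le (s n) (t n)
  refine (hbK_schur h1 (abs_hbN_sub_le s t)).2.trans ?_
  rw [mul_pow, mul_pow, mul_assoc]
  gcongr

/-- The nonlinear part as a map `ℓ² → ℓ²`. -/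
noncomputable def hbNV (s : HbH) : HbH := ⟨hbN s, hbH_memℓp.2 (hbN_schur s).1⟩

/-- The right-hand side as a vector of `ℓ²`. -/
noncomputable def hbRhsV : HbH := ⟨fun k => hbRhs (k + 1), hbH_memℓp.2 hbRhs_sq.1⟩

lemma hbNV_norm_le (s : HbH) : ‖hbNV s‖ ≤ 12.851 * 0.065 * ‖s‖ := by
  refine (sq_le_sq₀ (norm_nonneg _) (by positivity)).1 ?_
  rw [hbH_norm_sq]
  exact (hbN_schur s).2

lemma hbNV_sub_norm_le (s t : HbH) : ‖hbNV s - hbNV t‖ ≤ 12.851 * 0.13 * ‖s - t‖ := by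
  refine (sq_le_sq₀ (norm_nonneg _) (by positivity)).1 ?_
  rw [hbH_norm_sq]
  exact hbN_sub_schur s t

lemma hbRhsV_norm_le : ‖hbRhsV‖ ≤ 0.25 := by
  refine (sq_le_sq₀ (norm_nonneg _) (by norm_num)).1 ?_
  rw [hbH_norm_sq]
  refine hbRhs_sq.2.trans (by norm_num)

/-- The solution of the truncated system in the unknowns `s_n`, by the contraction principle. -/
lemma exists_hb_fixedPoint : ∃ s : HbH, s 0 = 0 ∧ ‖s‖ ≤ 0.126 ∧
    ∀ k, inner ℝ (hbRow (k + 1)) s + hbN s k = hbRhs (k + 1) := by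
  obtain ⟨B, hB0, hBi, hBn⟩ := exists_hb_inverse
  -- `0.3536` is slightly larger than `1/√8`.
  have hBn' : ∀ c, ‖B c‖ ≤ 0.3536 * ‖c‖ := fun c => by
    refine (sq_le_sq₀ (norm_nonneg _) (by positivity)).1 ?_
    have := hBn c
    rw [mul_pow]
    norm_num
    nlinarith [sq_nonneg ‖c‖]
  have hT : ContractingWith (0.6 : NNReal) fun s : HbH => B (hbRhsV - hbNV s) := by
    refine ⟨by rw [← NNReal.coe_lt_coe]; norm_num, LipschitzWith.of_dist_le_mul fun s t => ?_⟩
    rw [dist_eq_norm, dist_eq_norm, ← map_sub, sub_sub_sub_cancel_left]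
    refine (hBn' _).trans ?_
    have := hbNV_sub_norm_le t s
    rw [norm_sub_rev t s] at this
    have h0 := norm_nonneg (s - t)
    push_cast
    norm_num at this ⊢
    nlinarith
  obtain ⟨s, hs⟩ : ∃ s : HbH, B (hbRhsV - hbNV s) = s := ⟨_, hT.fixedPoint_isFixedPt⟩
  refine ⟨s, ?_, ?_, fun k => ?_⟩
  · rw [← hs]; exact hB0 _
  · have h1 := hBn' (hbRhsV - hbNV s)
    rw [hs] at h1
    have h2 := norm_sub_le hbRhsV (hbNV s)
    have h3 := hbNV_norm_le s
    have h4 := hbRhsV_norm_le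
    norm_num at *
    nlinarith
  · have := hBi (hbRhsV - hbNV s) k
    rw [hs] at this
    rw [this]
    change hbRhs (k + 1) - hbN s k + hbN s k = _
    ring

/-- On the ball of radius `0.126` the truncation is inactive, so the linear and nonlinear parts
add up to the left-hand side of the equation. -/
lemma hasSum_hbI {s : HbH} (hs : ‖s‖ ≤ 0.126) (k : ℕ) :
    HasSum (fun n => hbI (k + 1) n (hbφ (s n))) (inner ℝ (hbRow (k + 1)) s + hbN s k) := by
  refine ((lp.hasSum_inner (𝕜 := ℝ) (hbRow (k + 1)) s).add (hbE_summable s k).hasSum).congr_fun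
    fun n => ?_
  have hn : |s n| ≤ 0.126 := (lp.norm_apply_le_norm (by norm_num) s n).trans hs
  rw [hbE, sin_hbφ, hbClamp_of_abs_le hn, hbRow_apply]
  simp

/-- There is a square-summable sequence `δ` (here `δ n` denotes `δ_{n+1}`, `n : ℕ`) of
ℓ² norm at most `0.13` solving the system of equations determining the zeros of the
Hörmander–Bernhardsson extremal function. -/
theorem hb_equation_has_solution :
    ∃ δ : ℕ → ℝ,
      (Summable fun n : ℕ => (δ n) ^ 2) ∧
      Real.sqrt (∑' n : ℕ, (δ n) ^ 2) ≤ 0.13 ∧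
      ∀ k : ℕ, 1 ≤ k →
        (∑' n : ℕ, ∫ y in (0 : ℝ)..(δ n),
            Real.cos (Real.pi * y) *
              (1 / ((n : ℝ) + 1 + 1 / 2 - y - (k : ℝ)) +
               1 / ((n : ℝ) + 1 + 1 / 2 - y + (k : ℝ))))
          = (1 / Real.pi) *
              ∫ x in (-(1 / 2) : ℝ)..(1 / 2), Real.cos (Real.pi * x) / (x - (k : ℝ)) ^ 2 := by
  obtain ⟨s, hs0, hs, hk⟩ := exists_hb_fixedPoint
  have hφ : ∀ n, |hbφ (s n)| ≤ 0.13 / 0.126 * |s n| := fun n => by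
    have hn : |s n| ≤ 0.126 := (lp.norm_apply_le_norm (by norm_num) s n).trans hs
    simpa [hbClamp_of_abs_le hn] using abs_hbφ_le (s n)
  obtain ⟨h1, h2⟩ := sq_summable_of_le hφ
  refine ⟨fun n => hbφ (s (n + 1)),
    (summable_nat_add_iff (f := fun n => hbφ (s n) ^ 2) 1).2 h1, ?_, fun k hk1 => ?_⟩
  · apply Real.sqrt_le_iff.2 ⟨by norm_num, ?_⟩
    rw [h1.tsum_eq_zero_add, hs0, hbφ_zero] at h2
    have h3 : ‖s‖ ^ 2 ≤ 0.126 ^ 2 := by gcongr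
    norm_num at h2 h3 ⊢
    linarith
  · obtain ⟨j, rfl⟩ : ∃ j, k = j + 1 := ⟨k - 1, by omega⟩
    have h3 := hasSum_hbI hs j
    rw [hk j, ← hasSum_nat_add_iff' 1] at h3
    have h4 : ∑ i ∈ Finset.range 1, hbI (j + 1) i (hbφ (s i)) = 0 := by
      simp [hs0, hbφ_zero, hbI]
    rw [h4, sub_zero] at h3
    refine Eq.trans ?_ h3.tsum_eq
    congr 1
    funext n
    unfold hbI
    push_cast
    rfl
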